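/- Let w ∈ W and let w' = π_{J,δ}(w) ∈ W^J. Then there exists x ∈ W_{I(J,w',δ)} such that w →_{J,δ} w' x. -/

import Mathlib

open CoxeterSystem

variable {B : Type*} [Finite B] {W : Type*} [Group W] {M : CoxeterMatrix B}

namespace PartialConjugation

/-- The standard parabolic subgroup `W_J` of `W`, generated by the simple
reflections indexed by `J`. -/
def parab (cs : CoxeterSystem M W) (J : Set B) : Subgroup W :=
  Subgroup.closure (cs.simple '' J)

/-- The simple reflection `s_j` (for `j ∈ J`), viewed as an element of `W_J`. -/
def sJ (cs : CoxeterSystem M W) (J : Set B) (j : B) (hj : j ∈ J) : parab cs J :=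
  ⟨cs.simple j, Subgroup.subset_closure ⟨j, hj, rfl⟩⟩

/-- `w ∈ W^J`: `w` is a minimal length representative of its left coset `w W_J`. -/
def IsMinRep (cs : CoxeterSystem M W) (J : Set B) (w : W) : Prop :=
  ∀ v ∈ parab cs J, cs.length w ≤ cs.length (w * v)

variable (cs : CoxeterSystem M W) (J J' : Set B) (δ : parab cs J ≃* parab cs J')

/-- `δ` carries the set of simple reflections indexed by `J` onto the set of
simple reflections indexed by `J'`. -/
def MapsSimples : Prop :=
  (∀ j, ∀ hj : j ∈ J, ∃ j' ∈ J', (δ (sJ cs J j hj) : W) = cs.simple j') ∧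
  (∀ j' ∈ J', ∃ j, ∃ hj : j ∈ J, (δ (sJ cs J j hj) : W) = cs.simple j')

/-- `K` is a `w`-special subset of `J`. -/
def WSpecial (w : W) (K : Set B) : Prop :=
  K ⊆ J ∧ ∀ k ∈ K, ∃ j, ∃ hjJ : j ∈ J, j ∈ K ∧
    w * cs.simple k * w⁻¹ = (δ (sJ cs J j hjJ) : W)

/-- The set `I(J, w, δ)`: the union of all `w`-special subsets of `J`. -/
def Iset (w : W) : Set B := ⋃₀ {K | WSpecial cs J J' δ w K}

/-- The set `W_J ·_δ V = {δ(u) v u⁻¹ : u ∈ W_J, v ∈ V}`. -/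
def orbSet (V : Set W) : Set W :=
  {x | ∃ u : parab cs J, ∃ v ∈ V, x = (δ u : W) * v * (u : W)⁻¹}

/-- The orbit of `x` under the `δ`-twisted partial conjugation action of `W_J`. -/
def orbitOf (x : W) : Set W := orbSet cs J J' δ {x}

/-- The coset `w W_{I(J,w,δ)}`. -/
def coset (w : W) : Set W :=
  {x | ∃ v ∈ parab cs (Iset cs J J' δ w), x = w * v}

/-- Elementary step `v →_i v'` of `δ`-twisted conjugation: `v' = δ(s_i) v s_i`
with `i ∈ J` and `ℓ(v') ≤ ℓ(v)`. -/
def StepRel (v v' : W) : Prop :=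
  ∃ i, ∃ hi : i ∈ J, v' = (δ (sJ cs J i hi) : W) * v * cs.simple i ∧
    cs.length v' ≤ cs.length v

/-- The relation `v →_{J,δ} v'`. -/
def ToRel : W → W → Prop := Relation.ReflTransGen (StepRel cs J J' δ)

/-- The relation `v ≈_{J,δ} v'`. -/
def Approx (v v' : W) : Prop := ToRel cs J J' δ v v' ∧ ToRel cs J J' δ v' v

/-- The Bruhat order on `W`. -/
def bruhatLE (cs : CoxeterSystem M W) : W → W → Prop :=
  Relation.ReflTransGen
    (fun a b => ∃ t, cs.IsReflection t ∧ b = a * t ∧ cs.length a < cs.length b)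

/-- The set of minimal length elements in the orbit of `x`. -/
def orbMin (x : W) : Set W :=
  {y ∈ orbitOf cs J J' δ x | ∀ z ∈ orbitOf cs J J' δ x, cs.length y ≤ cs.length z}

/-!
Write `w = y * b` with `y ∈ W^J` and `b ∈ W_J`. Twisted conjugation by the last letter `s_i` of a
reduced word for `b` moves that letter to the front as `δ(s_i)`, where, by Deodhar's lemma, either
`δ(s_i) y` lies in `W^J` again and `b` has become shorter, or `δ(s_i)` passes through `y` and turns
into a simple reflection of `W_J`. Once `b` is as short as possible only the second case occurs, so
the letters of the shortest words form a `y`-special set and `b ∈ W_{I(J,y,δ)}`.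

It remains to see that `w` and `y * b` lie over the same element of `W^J`. If some `u ∈ W_J` carries
`w₁ x₁` to `w₂ x₂`, where `x_i ∈ W_{I(J,w_i,δ)}`, then a shortest such `u` is minimal modulo both
parabolic subgroups. Comparing lengths in `δ(u) w₁ x₁ = w₂ x₂ u` first yields `ℓ(x₁) = ℓ(x₂)` and
then `w₁ = w₂`.
-/

section

variable {cs J J' δ}

omit [Finite B]

/-! ### The exchange property -/

variable (cs) in
/-- The generators of the permutation representation of `W` on pairs (element, sign), with signs
written additively: `s_i` conjugates the element and flips the sign when that element is `s_i`.
The sign acquired by a reflection `t` under `w` is the parity of the number of occurrences of `t`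
in the right inversion sequence of any word for `w`. -/
def signedConj [DecidableEq W] (i : B) : Equiv.Perm (W × ZMod 2) :=
  Function.Involutive.toPerm
    (fun p => (cs.simple i * p.1 * cs.simple i, p.2 + if p.1 = cs.simple i then 1 else 0))
    fun p => by
      have conj_eq_iff : cs.simple i * p.1 * cs.simple i = cs.simple i ↔ p.1 = cs.simple i := by
        rw [mul_eq_right, mul_eq_one_iff_inv_eq, cs.inv_simple, eq_comm]
      ext
      · simp [mul_assoc]
      · simp only [conj_eq_iff, add_assoc, CharTwo.add_self_eq_zero, add_zero]

lemma signedConj_apply [DecidableEq W] (i : B) (p : W × ZMod 2) :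
    signedConj cs i p =
      (cs.simple i * p.1 * cs.simple i, p.2 + if p.1 = cs.simple i then 1 else 0) :=
  rfl

lemma prod_map_signedConj [DecidableEq W] (ω : List B) (p : W × ZMod 2) :
    (ω.map (signedConj cs)).prod p =
      (cs.wordProd ω * p.1 * (cs.wordProd ω)⁻¹,
        p.2 + ((cs.rightInvSeq ω).count p.1 : ZMod 2)) := by
  induction ω with
  | nil => simp
  | cons i ω ih =>
    have conj_eq_iff : cs.wordProd ω * p.1 * (cs.wordProd ω)⁻¹ = cs.simple i ↔
        (cs.wordProd ω)⁻¹ * cs.simple i * cs.wordProd ω = p.1 := by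
      rw [mul_inv_eq_iff_eq_mul, mul_assoc, inv_mul_eq_iff_eq_mul, eq_comm]
    rw [List.map_cons, List.prod_cons, Equiv.Perm.mul_apply, ih, signedConj_apply]
    simp only [conj_eq_iff]
    simp only [cs.wordProd_cons, rightInvSeq, List.count_cons, beq_iff_eq,
      mul_inv_rev, cs.inv_simple, mul_assoc, add_assoc, Nat.cast_add, Nat.cast_ite, Nat.cast_one,
      Nat.cast_zero]

lemma prod_map_reverse_alternatingWord {G : Type*} [Monoid G] (f : B → G) (i j : B) (m : ℕ) :
    ((alternatingWord i j (2 * m)).reverse.map f).prod = (f j * f i) ^ m := by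
  induction m with
  | zero => simp [alternatingWord]
  | succ m ih =>
    rw [Nat.mul_succ, alternatingWord_succ, alternatingWord_succ]
    simp only [List.concat_eq_append, List.append_assoc, List.reverse_append, List.map_append,
      List.prod_append, ih, pow_succ']
    simp [mul_assoc]

/-- The left inversion sequence of `(s_i s_j) ^ m(i, j)` runs twice through the same sequence of
reflections. -/
lemma even_count_leftInvSeq_alternatingWord [DecidableEq W] (i j : B) (t : W) :
    Even ((cs.leftInvSeq (alternatingWord i j (2 * M i j))).count t) := by
  set l := cs.leftInvSeq (alternatingWord i j (2 * M i j)) with hl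
  have length_l : l.length = 2 * M i j := by simp [hl]
  have periodic : l.drop (M i j) = l.take (M i j) := by
    refine List.ext_getElem (by simp [length_l]; lia) fun k _ hk => ?_
    have hk : k < M i j := by simp only [List.length_take] at hk; lia
    simp only [hl, List.getElem_drop, List.getElem_take]
    rw [cs.getElem_leftInvSeq_alternatingWord i j _ _ (by lia),
      cs.getElem_leftInvSeq_alternatingWord i j _ _ (by lia),
      cs.prod_alternatingWord_eq_mul_pow, cs.prod_alternatingWord_eq_mul_pow,
      show (2 * (M i j + k) + 1) / 2 = M i j + k by lia, show (2 * k + 1) / 2 = k by lia,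
      pow_add, M.symmetric i j, cs.simple_mul_simple_pow]
    simp
  rw [← List.take_append_drop (M i j) l, List.count_append, periodic]
  exact Even.add_self _

lemma isLiftable_signedConj [DecidableEq W] : M.IsLiftable (signedConj cs) := by
  intro i j
  ext1 p
  have even_count := even_count_leftInvSeq_alternatingWord (cs := cs) j i p.1
  rw [M.symmetric j i] at even_count
  rw [← prod_map_reverse_alternatingWord, prod_map_signedConj, cs.rightInvSeq_reverse,
    List.count_reverse, even_count.natCast_zmod_two,
    CoxeterSystem.wordProd, prod_map_reverse_alternatingWord, cs.simple_mul_simple_pow]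
  simp

lemma natCast_count_rightInvSeq_eq [DecidableEq W] {ω η : List B}
    (h : cs.wordProd ω = cs.wordProd η) (t : W) :
    ((cs.rightInvSeq ω).count t : ZMod 2) = (cs.rightInvSeq η).count t := by
  have lift_wordProd (ξ : List B) : cs.lift ⟨signedConj cs, isLiftable_signedConj⟩ (cs.wordProd ξ) =
      (ξ.map (signedConj cs)).prod := by
    simp [CoxeterSystem.wordProd, map_list_prod, Function.comp_def, cs.lift_apply_simple]
  have h_act : (ω.map (signedConj cs)).prod (t, 0) = (η.map (signedConj cs)).prod (t, 0) := by
    rw [← lift_wordProd, ← lift_wordProd, h]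
  simpa [prod_map_signedConj] using congrArg Prod.snd h_act

lemma simple_mem_rightInvSeq {ω : List B} {i : B} (h : cs.IsRightDescent (cs.wordProd ω) i) :
    cs.simple i ∈ cs.rightInvSeq ω := by
  classical
  obtain ⟨η, η_reduced, hη⟩ := cs.exists_isReduced (cs.wordProd ω * cs.simple i)
  have wordProd_eq : cs.wordProd ω = cs.wordProd (η.concat i) := by
    rw [cs.wordProd_concat, ← hη, cs.simple_mul_simple_cancel_right]
  have concat_reduced : cs.IsReduced (η.concat i) := by
    rw [cs.isRightDescent_iff, hη, η_reduced.eq] at h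
    rw [CoxeterSystem.IsReduced, ← wordProd_eq, ← h, List.length_concat]
  have count_concat : (cs.rightInvSeq (η.concat i)).count (cs.simple i) = 1 :=
    List.count_eq_one_of_mem concat_reduced.nodup_rightInvSeq (by rw [cs.rightInvSeq_concat]; simp)
  by_contra h_notMem
  have parity_eq := natCast_count_rightInvSeq_eq wordProd_eq (cs.simple i)
  rw [count_concat, List.count_eq_zero_of_not_mem h_notMem] at parity_eq
  simp at parity_eq

lemma exists_wordProd_eraseIdx_eq {ω : List B} {i : B}
    (h : cs.IsRightDescent (cs.wordProd ω) i) :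
    ∃ k < ω.length, cs.wordProd (ω.eraseIdx k) = cs.wordProd ω * cs.simple i := by
  obtain ⟨k, hk, hki⟩ := List.mem_iff_getElem.mp (simple_mem_rightInvSeq h)
  refine ⟨k, by simpa using hk, ?_⟩
  rw [← cs.wordProd_mul_getD_rightInvSeq, List.getD_eq_getElem _ _ hk, hki]

lemma simple_mul_eq_mul_simple {w : W} {i k : B} (hw : ¬cs.IsRightDescent w k)
    (hiw : cs.IsRightDescent (cs.simple i * w) k) : cs.simple i * w = w * cs.simple k := by
  obtain ⟨ω, ω_reduced, rfl⟩ := cs.exists_isReduced w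
  rw [← cs.wordProd_cons] at hiw
  obtain ⟨m, hm, h⟩ := exists_wordProd_eraseIdx_eq hiw
  rcases m with _ | m
  · rw [List.eraseIdx_zero, List.tail_cons, cs.wordProd_cons] at h
    nth_rw 2 [h]
    rw [cs.simple_mul_simple_cancel_right]
  · rw [List.eraseIdx_cons_succ, cs.wordProd_cons, cs.wordProd_cons, mul_assoc,
      mul_right_inj] at h
    have := cs.length_wordProd_le (ω.eraseIdx m)
    have := List.length_eraseIdx_add_one (Nat.lt_of_succ_lt_succ hm)
    rw [cs.not_isRightDescent_iff, ← h, ω_reduced.eq] at hw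
    lia

/-! ### Parabolic subgroups and minimal coset representatives -/

lemma simple_mem_parab {j : B} (hj : j ∈ J) : cs.simple j ∈ parab cs J :=
  Subgroup.subset_closure ⟨j, hj, rfl⟩

lemma wordProd_mem_parab {ω : List B} (hω : ∀ i ∈ ω, i ∈ J) : cs.wordProd ω ∈ parab cs J :=
  Subgroup.list_prod_mem _ fun _ h => by
    obtain ⟨i, hi, rfl⟩ := List.mem_map.1 h
    exact simple_mem_parab (hω i hi)

lemma parab_mono (h : J ⊆ J') : parab cs J ≤ parab cs J' :=
  Subgroup.closure_mono (Set.image_mono h)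

variable (cs J) in
lemma isMinRep_one : IsMinRep cs J 1 := fun v _ => by simp

variable (cs J) in
lemma exists_isMinRep_mul (w : W) : ∃ y, IsMinRep cs J y ∧ ∃ b ∈ parab cs J, y * b = w := by
  obtain ⟨v, hv, hmin⟩ :=
    exists_minimalFor_of_wellFoundedLT (· ∈ parab cs J) (fun v => cs.length (w * v)) ⟨1, one_mem _⟩
  refine ⟨w * v, fun u hu => ?_, v⁻¹, inv_mem hv, mul_inv_cancel_right w v⟩
  rw [mul_assoc]
  exact (le_total _ _).elim id (hmin (mul_mem hv hu))

/-- By the exchange property, a length drop deletes a letter of a word for `y` or of `ω`; the former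
contradicts the minimality of `y`. -/
lemma IsMinRep.exists_word_mul_simple {y : W} (hy : IsMinRep cs J y) {ω : List B}
    (hω : ∀ i ∈ ω, i ∈ J) (hlen : cs.length (y * cs.wordProd ω) = cs.length y + ω.length)
    {j : B} (hj : j ∈ J) :
    ∃ η : List B, (∀ i ∈ η, i ∈ J) ∧ cs.wordProd η = cs.wordProd ω * cs.simple j ∧
      cs.length (y * cs.wordProd η) = cs.length y + η.length := by
  by_cases hdesc : cs.IsRightDescent (y * cs.wordProd ω) j
  swap
  · rw [cs.not_isRightDescent_iff, hlen] at hdesc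
    refine ⟨ω.concat j, by simpa [or_imp, forall_and] using ⟨hω, hj⟩, cs.wordProd_concat j ω, ?_⟩
    rw [cs.wordProd_concat, ← mul_assoc, hdesc, List.length_concat, add_assoc]
  obtain ⟨ξ, ξ_reduced, hξ⟩ := cs.exists_isReduced y
  have hdesc' := hdesc
  rw [hξ, ← cs.wordProd_append] at hdesc'
  obtain ⟨k, hk, h⟩ := exists_wordProd_eraseIdx_eq hdesc'
  rcases lt_or_ge k ξ.length with hkξ | hkξ
  · rw [List.eraseIdx_append_of_lt_length hkξ, cs.wordProd_append, cs.wordProd_append, ← hξ,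
      ← eq_mul_inv_iff_mul_eq, mul_assoc, mul_assoc, ← mul_assoc (cs.wordProd ω)] at h
    have hωJ := wordProd_mem_parab (cs := cs) hω
    have y_le := hy _ (mul_mem (mul_mem hωJ (simple_mem_parab hj)) (inv_mem hωJ))
    have := cs.length_wordProd_le (ξ.eraseIdx k)
    have := List.length_eraseIdx_add_one hkξ
    rw [← h, hξ, ξ_reduced.eq] at y_le
    lia
  · rw [List.eraseIdx_append_of_length_le hkξ, cs.wordProd_append, cs.wordProd_append,
      mul_assoc, mul_right_inj] at h
    refine ⟨_, fun i hi => hω i (List.mem_of_mem_eraseIdx hi), h, ?_⟩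
    rw [cs.isRightDescent_iff, hlen, mul_assoc, ← h] at hdesc
    have := List.length_eraseIdx_add_one (l := ω) (i := k - ξ.length)
      (by simp only [List.length_append] at hk; lia)
    lia

lemma IsMinRep.exists_word {y b : W} (hy : IsMinRep cs J y) (hb : b ∈ parab cs J) :
    ∃ ω : List B, (∀ i ∈ ω, i ∈ J) ∧ cs.wordProd ω = b ∧
      cs.length (y * cs.wordProd ω) = cs.length y + ω.length := by
  unfold parab at hb
  induction hb using Subgroup.closure_induction_right with
  | one => exact ⟨[], by simp⟩
  | mul_right _ _ _ hs ih | mul_inv_cancel _ _ _ hs ih =>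
    obtain ⟨j, hj, rfl⟩ := hs
    obtain ⟨ω, hω, rfl, hlen⟩ := ih
    simpa only [cs.inv_simple] using hy.exists_word_mul_simple hω hlen hj

lemma exists_reduced_word_of_mem_parab {b : W} (hb : b ∈ parab cs J) :
    ∃ ω : List B, (∀ i ∈ ω, i ∈ J) ∧ cs.IsReduced ω ∧ cs.wordProd ω = b := by
  obtain ⟨ω, hω, hωb, hlen⟩ := (isMinRep_one cs J).exists_word hb
  exact ⟨ω, hω, by simpa [CoxeterSystem.IsReduced] using hlen, hωb⟩

lemma IsMinRep.length_mul {y b : W} (hy : IsMinRep cs J y) (hb : b ∈ parab cs J) :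
    cs.length (y * b) = cs.length y + cs.length b := by
  obtain ⟨ω, -, rfl, hlen⟩ := hy.exists_word hb
  refine (cs.length_mul_le _ _).antisymm ?_
  rw [hlen]
  exact Nat.add_le_add_left (cs.length_wordProd_le ω) _

lemma IsMinRep.eq_of_mul_eq_mul {y z a b : W} (hy : IsMinRep cs J y) (hz : IsMinRep cs J z)
    (ha : a ∈ parab cs J) (hb : b ∈ parab cs J) (h : y * a = z * b) : y = z := by
  have hab : a * b⁻¹ ∈ parab cs J := mul_mem ha (inv_mem hb)
  have hz_eq : z = y * (a * b⁻¹) := by rw [← mul_assoc, h, mul_inv_cancel_right]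
  have hzy := hz _ (inv_mem hab)
  rw [hz_eq, mul_inv_cancel_right, hy.length_mul hab] at hzy
  have : a * b⁻¹ = 1 := cs.length_eq_zero_iff.1 (by lia)
  rw [hz_eq, this, mul_one]

lemma isMinRep_of_forall_not_isRightDescent {w : W} (h : ∀ j ∈ J, ¬cs.IsRightDescent w j) :
    IsMinRep cs J w := by
  obtain ⟨y, hy, b, hb, rfl⟩ := exists_isMinRep_mul cs J w
  obtain ⟨ω, hω, hlen, rfl⟩ := exists_reduced_word_of_mem_parab hb
  rcases List.eq_nil_or_concat ω with rfl | ⟨η, j, rfl⟩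
  · simpa using hy
  · refine absurd ?_ (h j (hω j (by simp)))
    have hη : cs.wordProd η ∈ parab cs J := wordProd_mem_parab fun i hi => hω i (by simp [hi])
    have := cs.length_wordProd_le η
    rw [CoxeterSystem.IsRightDescent, hy.length_mul hb, hlen.eq, cs.wordProd_concat, ← mul_assoc,
      cs.simple_mul_simple_cancel_right, hy.length_mul hη, List.length_concat]
    lia

/-- Deodhar's lemma. -/
lemma IsMinRep.simple_mul {y : W} (hy : IsMinRep cs J y) (i : B) :
    IsMinRep cs J (cs.simple i * y) ∨ ∃ k ∈ J, cs.simple i * y = y * cs.simple k := by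
  by_cases h : ∃ k ∈ J, cs.IsRightDescent (cs.simple i * y) k
  · obtain ⟨k, hk, hdesc⟩ := h
    exact .inr ⟨k, hk, simple_mul_eq_mul_simple (hy _ (simple_mem_parab hk)).not_gt hdesc⟩
  · push Not at h
    exact .inl (isMinRep_of_forall_not_isRightDescent h)

lemma IsMinRep.exists_mul_eq_mul {y : W} (hy : IsMinRep cs J y) (v : W) :
    ∃ z, IsMinRep cs J z ∧ ∃ p ∈ parab cs J, v * y = z * p ∧ cs.length p ≤ cs.length v ∧
      (cs.length p = cs.length v → z = y) := by
  obtain ⟨ω, ω_reduced, rfl⟩ := cs.exists_isReduced v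
  rw [ω_reduced.eq]
  clear ω_reduced
  induction ω with
  | nil => exact ⟨y, hy, 1, one_mem _, by simp⟩
  | cons i ω ih =>
    obtain ⟨z, hz, p, hp, h, hle, heq⟩ := ih
    simp only [cs.wordProd_cons, mul_assoc, h, List.length_cons]
    rcases hz.simple_mul i with hiz | ⟨k, hk, hiz⟩
    · exact ⟨_, hiz, p, hp, by rw [mul_assoc], by lia, by lia⟩
    · have := cs.length_simple_mul p k
      exact ⟨z, hz, cs.simple k * p, mul_mem (simple_mem_parab hk) hp,
        by rw [← mul_assoc, hiz, mul_assoc], by lia, fun _ => heq (by lia)⟩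

/-! ### Special subsets and the twist -/

lemma image_subset_image_comm_of_finite {α β : Type*} {f g : α → β} {R : Set α} (hR : R.Finite)
    (hf : f.Injective) (hg : g.Injective) : f '' R ⊆ g '' R ↔ g '' R ⊆ f '' R := by
  have ncard_eq : (f '' R).ncard = (g '' R).ncard := by
    rw [Set.ncard_image_of_injective R hf, Set.ncard_image_of_injective R hg]
  exact ⟨fun h => (Set.eq_of_subset_of_ncard_le h ncard_eq.ge (hR.image g)).ge,
    fun h => (Set.eq_of_subset_of_ncard_le h ncard_eq.le (hR.image f)).ge⟩

lemma wSpecial_iff (hJ : J.Finite) {w : W} {K : Set B} (hKJ : K ⊆ J) :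
    WSpecial cs J J' δ w K ↔
      ∀ j (hj : j ∈ K), ∃ k ∈ K, w * cs.simple k * w⁻¹ = (δ (sJ cs J j (hKJ hj)) : W) := by
  have : Finite K := hJ.subset hKJ
  have conj_injective : Function.Injective fun u : parab cs J => w * (u : W) * w⁻¹ :=
    (MulAut.conj w).injective.comp Subtype.val_injective
  have map_injective : Function.Injective fun u : parab cs J => (δ u : W) :=
    Subtype.val_injective.comp δ.injective
  have image_comm := image_subset_image_comm_of_finite
    (Set.finite_range fun j : K => sJ cs J j (hKJ j.2)) conj_injective map_injective
  simp only [Set.range_subset_iff, ← Set.range_comp, Set.mem_range, Function.comp_apply,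
    Subtype.forall, Subtype.exists, sJ, exists_prop] at image_comm
  refine Iff.trans ⟨fun h k hk => ?_, fun h => ⟨hKJ, fun k hk => ?_⟩⟩ image_comm
  · obtain ⟨j, _, hj, hkj⟩ := h.2 k hk
    exact ⟨j, hj, hkj.symm⟩
  · obtain ⟨j, hj, hkj⟩ := h k hk
    exact ⟨j, hKJ hj, hj, hkj.symm⟩

lemma wSpecial_Iset (w : W) : WSpecial cs J J' δ w (Iset cs J J' δ w) := by
  refine ⟨Set.sUnion_subset fun K hK => hK.1, ?_⟩
  rintro k ⟨K, hK, hk⟩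
  obtain ⟨j, hjJ, hjK, hkj⟩ := hK.2 k hk
  exact ⟨j, hjJ, ⟨K, hK, hjK⟩, hkj⟩

lemma inv_mul_map_mul_mem (hJ : J.Finite) {w : W} {v : parab cs J}
    (hv : (v : W) ∈ parab cs (Iset cs J J' δ w)) :
    w⁻¹ * (δ v : W) * w ∈ parab cs (Iset cs J J' δ w) := by
  let ψ : parab cs J →* W :=
    (MulAut.conj w⁻¹).toMonoidHom.comp ((parab cs J').subtype.comp δ.toMonoidHom)
  have ψ_apply (u : parab cs J) : ψ u = w⁻¹ * (δ u : W) * w := by simp [ψ]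
  have parab_le : parab cs (Iset cs J J' δ w) ≤
      ((parab cs (Iset cs J J' δ w)).comap ψ).map (parab cs J).subtype := by
    refine (Subgroup.closure_le _).2 ?_
    rintro _ ⟨j, hj, rfl⟩
    have hIJ := (wSpecial_Iset (cs := cs) (δ := δ) w).1
    obtain ⟨k, hk, hkj⟩ := (wSpecial_iff hJ hIJ).1 (wSpecial_Iset w) j hj
    refine ⟨sJ cs J j (hIJ hj), ?_, rfl⟩
    rw [SetLike.mem_coe, Subgroup.mem_comap, ψ_apply, ← hkj]
    simpa [mul_assoc] using simple_mem_parab hk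
  obtain ⟨u, hu, huv⟩ := parab_le hv
  rw [← ψ_apply, ← Subtype.ext huv]
  exact hu

lemma map_mul_mul_inv_mem_coset (hJ : J.Finite) {w a : W} (ha : a ∈ coset cs J J' δ w)
    {v : parab cs J} (hv : (v : W) ∈ parab cs (Iset cs J J' δ w)) :
    (δ v : W) * a * (v : W)⁻¹ ∈ coset cs J J' δ w := by
  obtain ⟨x, hx, rfl⟩ := ha
  exact ⟨_, mul_mem (mul_mem (inv_mul_map_mul_mem hJ hv) hx) (inv_mem hv), by simp [mul_assoc]⟩

lemma length_map_le (hδ : MapsSimples cs J J' δ) (u : parab cs J) :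
    cs.length (δ u : W) ≤ cs.length (u : W) := by
  obtain ⟨ω, hω, ω_reduced, hωu⟩ := exists_reduced_word_of_mem_parab u.2
  rw [← hωu, ω_reduced.eq]
  clear ω_reduced
  induction ω generalizing u with
  | nil =>
    obtain rfl : u = 1 := Subtype.ext (by simpa using hωu.symm)
    simp
  | cons i ω ih =>
    simp only [List.forall_mem_cons] at hω
    obtain ⟨i', -, hi'⟩ := hδ.1 i hω.1
    have hu : u = sJ cs J i hω.1 * ⟨cs.wordProd ω, wordProd_mem_parab hω.2⟩ :=
      Subtype.ext (by rw [← hωu, cs.wordProd_cons]; rfl)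
    rw [hu, map_mul, Subgroup.coe_mul, hi', List.length_cons, add_comm, ← cs.length_simple i']
    exact (cs.length_mul_le _ _).trans (Nat.add_le_add_left (ih _ hω.2 rfl) _)

/-! ### The orbits of distinct cosets are disjoint -/

variable (δ) in
/-- The set of `u ∈ W_J` whose `δ`-twisted conjugation takes some element of the coset
`w₁ W_{I(J,w₁,δ)}` into `w₂ W_{I(J,w₂,δ)}`; it is nonempty exactly when the two orbit sets
`W_J ·_δ (w_i W_{I(J,w_i,δ)})` meet. -/
def transporter (w₁ w₂ : W) : Set (parab cs J) :=
  {u | ∃ a ∈ coset cs J J' δ w₁, (δ u : W) * a * (u : W)⁻¹ ∈ coset cs J J' δ w₂}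

lemma inv_mem_transporter {w₁ w₂ : W} {u : parab cs J} (hu : u ∈ transporter δ w₁ w₂) :
    u⁻¹ ∈ transporter δ w₂ w₁ := by
  obtain ⟨a, ha, hua⟩ := hu
  exact ⟨_, hua, by simpa [mul_assoc] using ha⟩

lemma mul_mem_transporter (hJ : J.Finite) {w₁ w₂ : W} {u v : parab cs J}
    (hu : u ∈ transporter δ w₁ w₂) (hv : (v : W) ∈ parab cs (Iset cs J J' δ w₁)) :
    u * v ∈ transporter δ w₁ w₂ := by
  obtain ⟨a, ha, hua⟩ := hu
  have hv_inv : ((v⁻¹ : parab cs J) : W) ∈ parab cs (Iset cs J J' δ w₁) := inv_mem hv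
  exact ⟨_, map_mul_mul_inv_mem_coset hJ ha hv_inv, by simpa [mul_assoc] using hua⟩

lemma isMinRep_of_minimal_transporter (hJ : J.Finite) {w₁ w₂ : W} {u : parab cs J}
    (hu : u ∈ transporter δ w₁ w₂)
    (hmin : ∀ v ∈ transporter δ w₁ w₂, cs.length (u : W) ≤ cs.length (v : W)) :
    IsMinRep cs (Iset cs J J' δ w₁) (u : W) := fun v hv =>
  hmin (u * ⟨v, parab_mono (wSpecial_Iset w₁).1 hv⟩) (mul_mem_transporter hJ hu hv)

lemma IsMinRep.length_le_of_map_mul_eq (hδ : MapsSimples cs J J' δ) {w₁ w₂ : W}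
    (h₁ : IsMinRep cs J w₁) (h₂ : IsMinRep cs J w₂) {I : Set B} (hI : I ⊆ J) {u : parab cs J}
    (hu : IsMinRep cs I (u : W)⁻¹) {x₁ x₂ : W} (hx₁ : x₁ ∈ parab cs J) (hx₂ : x₂ ∈ parab cs I)
    (h : (δ u : W) * w₁ * x₁ = w₂ * x₂ * u) :
    cs.length x₂ ≤ cs.length x₁ ∧ (cs.length x₁ ≤ cs.length x₂ → w₁ = w₂) := by
  obtain ⟨z, hz, p, hp, hzp, hp_le, eq_of_length_eq⟩ := h₁.exists_mul_eq_mul (δ u : W)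
  rw [hzp, mul_assoc, mul_assoc] at h
  obtain rfl := hz.eq_of_mul_eq_mul h₂ (mul_mem hp hx₁) (mul_mem (parab_mono hI hx₂) u.2) h
  have length_mul : cs.length (x₂ * u) = cs.length x₂ + cs.length (u : W) := by
    rw [← cs.length_inv, mul_inv_rev, hu.length_mul (inv_mem hx₂), cs.length_inv, cs.length_inv,
      add_comm]
  have length_le := cs.length_mul_le p x₁
  rw [mul_left_cancel h, length_mul] at length_le
  have := length_map_le hδ u
  exact ⟨by lia, fun hx => (eq_of_length_eq (by lia)).symm⟩

lemma IsMinRep.eq_of_mem_transporter (hJ : J.Finite) (hδ : MapsSimples cs J J' δ) {w₁ w₂ : W}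
    (h₁ : IsMinRep cs J w₁) (h₂ : IsMinRep cs J w₂) {u : parab cs J}
    (hu : u ∈ transporter δ w₁ w₂) : w₁ = w₂ := by
  obtain ⟨u, hu, hmin⟩ : ∃ u ∈ transporter δ w₁ w₂, ∀ v ∈ transporter δ w₁ w₂,
      cs.length (u : W) ≤ cs.length (v : W) := by
    obtain ⟨u, hu, hmin⟩ := exists_minimalFor_of_wellFoundedLT (· ∈ transporter δ w₁ w₂)
      (fun u => cs.length (u : W)) ⟨u, hu⟩
    exact ⟨u, hu, fun v hv => (le_total _ _).elim id (hmin hv)⟩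
  have u_min := isMinRep_of_minimal_transporter hJ hu hmin
  have u_inv_min := isMinRep_of_minimal_transporter hJ (inv_mem_transporter hu) fun v hv => by
    simpa using hmin v⁻¹ (inv_mem_transporter hv)
  obtain ⟨_, ⟨x₁, hx₁, rfl⟩, x₂, hx₂, h⟩ := hu
  have hI₁ := (wSpecial_Iset (cs := cs) (δ := δ) w₁).1
  have hI₂ := (wSpecial_Iset (cs := cs) (δ := δ) w₂).1
  have length_le := h₂.length_le_of_map_mul_eq hδ h₁ hI₁ (u := u⁻¹) (by simpa using u_min)
    (parab_mono hI₂ hx₂) hx₁ (by simp [mul_assoc, ← h])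
  have eq_of_le := h₁.length_le_of_map_mul_eq hδ h₂ hI₂ u_inv_min
    (parab_mono hI₁ hx₁) hx₂ (by simp [mul_assoc, ← h])
  exact eq_of_le.2 length_le.1

/-! ### Descending to a special coset -/

lemma exists_map_mul_of_toRel {v w : W} (h : ToRel cs J J' δ w v) :
    ∃ u : parab cs J, v = (δ u : W) * w * (u : W)⁻¹ := by
  unfold ToRel at h
  induction h with
  | refl => exact ⟨1, by simp⟩
  | tail _ hstep ih =>
    obtain ⟨u, rfl⟩ := ih
    obtain ⟨i, hi, rfl, -⟩ := hstep
    exact ⟨sJ cs J i hi * u, by simp [sJ, mul_assoc]⟩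

variable (δ) in
/-- The word `ω` is a shortest one among the words `η` in `J` such that `w →_{J,δ} z · π(η)` for
some `z ∈ W^J`, and `z = y` is possible for `ω`. -/
structure IsShortestTail (w y : W) (ω : List B) : Prop where
  isMinRep : IsMinRep cs J y
  mem : ∀ i ∈ ω, i ∈ J
  toRel : ToRel cs J J' δ w (y * cs.wordProd ω)
  length_le : ∀ z η, IsMinRep cs J z → (∀ i ∈ η, i ∈ J) →
    ToRel cs J J' δ w (z * cs.wordProd η) → ω.length ≤ η.length

variable (δ) in
lemma exists_isShortestTail (w : W) : ∃ y ω, IsShortestTail δ w y ω := by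
  have nonempty : ∃ yω : W × List B, IsMinRep cs J yω.1 ∧ (∀ i ∈ yω.2, i ∈ J) ∧
      ToRel cs J J' δ w (yω.1 * cs.wordProd yω.2) := by
    obtain ⟨y, hy, b, hb, rfl⟩ := exists_isMinRep_mul cs J w
    obtain ⟨ω, hω, -, rfl⟩ := exists_reduced_word_of_mem_parab hb
    exact ⟨(y, ω), hy, hω, .refl⟩
  obtain ⟨⟨y, ω⟩, ⟨hy, hω, hrel⟩, hmin⟩ :=
    exists_minimalFor_of_wellFoundedLT _ (fun yω => yω.2.length) nonempty
  exact ⟨y, ω, hy, hω, hrel, fun z η hz hη hzη =>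
    (le_total _ _).elim id (hmin (j := (z, η)) ⟨hz, hη, hzη⟩)⟩

lemma IsShortestTail.length_mul_wordProd {w y : W} {ω : List B} (h : IsShortestTail δ w y ω) :
    cs.length (y * cs.wordProd ω) = cs.length y + ω.length := by
  obtain ⟨η, hη, η_reduced, hηω⟩ :=
    exists_reduced_word_of_mem_parab (wordProd_mem_parab (cs := cs) h.mem)
  have length_le := h.length_le y η h.isMinRep hη (hηω ▸ h.toRel)
  have := cs.length_wordProd_le ω
  rw [h.isMinRep.length_mul (wordProd_mem_parab h.mem)]
  rw [← hηω, η_reduced.eq] at this ⊢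
  lia

/-- Twisting by the last letter `i` never increases the length, and in the first case of Deodhar's
lemma for `δ(s_i) y` it would produce a shorter tail. -/
lemma IsShortestTail.rotate (hδ : MapsSimples cs J J' δ) {w y : W} {ω : List B} {i : B}
    (h : IsShortestTail δ w y (ω ++ [i])) :
    ∃ k, (∃ hi : i ∈ J, y * cs.simple k * y⁻¹ = (δ (sJ cs J i hi) : W)) ∧
      IsShortestTail δ w y (k :: ω) := by
  have hi : i ∈ J := h.mem i (by simp)
  have hω : ∀ j ∈ ω, j ∈ J := fun j hj => h.mem j (by simp [hj])
  obtain ⟨i', -, hi'⟩ := hδ.1 i hi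
  have hrel : ToRel cs J J' δ w (cs.simple i' * y * cs.wordProd ω) := by
    refine h.toRel.tail ⟨i, hi, by simp [hi', cs.wordProd_append, mul_assoc], ?_⟩
    rw [h.length_mul_wordProd, mul_assoc, List.length_append, List.length_singleton]
    have := cs.length_simple_mul (y * cs.wordProd ω) i'
    have := cs.length_mul_le y (cs.wordProd ω)
    have := cs.length_wordProd_le ω
    lia
  rcases h.isMinRep.simple_mul i' with hy | ⟨k, hk, hik⟩
  · exact absurd (h.length_le _ ω hy hω hrel) (by simp)
  · refine ⟨k, ⟨hi, by rw [hi', ← hik, mul_inv_cancel_right]⟩, h.isMinRep, ?_, ?_, ?_⟩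
    · simpa using ⟨hk, hω⟩
    · rwa [cs.wordProd_cons, ← mul_assoc, ← hik]
    · simpa using h.length_le

lemma exists_mem_of_rotate {α : Type*} {P : List α → Prop} {R : α → α → Prop}
    (rotate : ∀ l a, P (l ++ [a]) → ∃ b, R a b ∧ P (b :: l)) {l : List α} {a : α} (hl : P l)
    (ha : a ∈ l) : ∃ b, R a b ∧ ∃ l', P l' ∧ b ∈ l' := by
  obtain ⟨s, t, rfl⟩ := List.append_of_mem ha
  clear ha
  induction t using List.reverseRecOn generalizing s with
  | nil =>
    obtain ⟨b, hab, hb⟩ := rotate s a hl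
    exact ⟨b, hab, _, hb, List.mem_cons_self⟩
  | append_singleton t c ih =>
    obtain ⟨b, -, hb⟩ := rotate (s ++ a :: t) c (by simpa using hl)
    exact ih (b :: s) hb

lemma IsShortestTail.mem_Iset (hJ : J.Finite) (hδ : MapsSimples cs J J' δ) {w y : W}
    {ω : List B} (h : IsShortestTail δ w y ω) : ∀ i ∈ ω, i ∈ Iset cs J J' δ y := by
  let K : Set B := {j | ∃ η, IsShortestTail δ w y η ∧ j ∈ η}
  have hKJ : K ⊆ J := fun j ⟨η, hη, hj⟩ => hη.mem j hj
  have K_special : WSpecial cs J J' δ y K := by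
    rw [wSpecial_iff hJ hKJ]
    rintro j ⟨η, hη, hj⟩
    obtain ⟨k, ⟨_, hjk⟩, hk⟩ := exists_mem_of_rotate (fun _ _ => IsShortestTail.rotate hδ) hη hj
    exact ⟨k, hk, hjk⟩
  exact fun i hi => ⟨K, K_special, ω, h, hi⟩

lemma exists_toRel_mul (hJ : J.Finite) (hδ : MapsSimples cs J J' δ) (w : W) :
    ∃ y, IsMinRep cs J y ∧
      ∃ x ∈ parab cs (Iset cs J J' δ y), ToRel cs J J' δ w (y * x) := by
  obtain ⟨y, ω, h⟩ := exists_isShortestTail δ w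
  exact ⟨y, h.isMinRep, _, wordProd_mem_parab (h.mem_Iset hJ hδ), h.toRel⟩

theorem stmt4_general (hJ : J.Finite) (hδ : MapsSimples cs J J' δ) (w w' : W)
    (hw' : IsMinRep cs J w') (hproj : w ∈ orbSet cs J J' δ (coset cs J J' δ w')) :
    ∃ x ∈ parab cs (Iset cs J J' δ w'), ToRel cs J J' δ w (w' * x) := by
  obtain ⟨y, hy, x, hx, hrel⟩ := exists_toRel_mul hJ hδ w
  obtain ⟨u₁, hu₁⟩ := exists_map_mul_of_toRel hrel
  obtain ⟨u₀, a, ha, rfl⟩ := hproj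
  have mem_transporter : u₁ * u₀ ∈ transporter δ w' y :=
    ⟨a, ha, x, hx, by simp [hu₁, mul_assoc]⟩
  obtain rfl := hw'.eq_of_mem_transporter hJ hδ hy mem_transporter
  exact ⟨x, hx, hrel⟩

end

/-- If `w' = π_{J,δ}(w)` (i.e. `w' ∈ W^J` and
`w ∈ W_J ·_δ (w' W_{I(J,w',δ)})`), then `w →_{J,δ} w' x` for some
`x ∈ W_{I(J,w',δ)}`. -/
theorem stmt4 (hδ : MapsSimples cs J J' δ) (w w' : W) (hw' : IsMinRep cs J w')
    (hproj : w ∈ orbSet cs J J' δ (coset cs J J' δ w')) :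
    ∃ x ∈ parab cs (Iset cs J J' δ w'), ToRel cs J J' δ w (w' * x) :=
  stmt4_general (Set.toFinite J) hδ w w' hw' hproj

end PartialConjugation
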